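/- Let d ≥ 1, ᾱ ∈ (0,1), r > 0, ε ≥ 0, and x₀, Δx ∈ ℝ^d with ‖Δx‖₂ < r. Let μ = N(√ᾱ·x₀, (1−ᾱ)·I_d) and ν = N(√ᾱ·(x₀+Δx), (1−ᾱ)·I_d). Let (𝒴, Σ) be any measurable space (the label space) and κ a Markov kernel from ℝ^d to 𝒴 (modeling the composition of the reverse denoising process and the base classifier). Then for every label y ∈ 𝒴 with {y} measurable, (ν.bind κ)(𝒴 \ {y}) ≤ e^ε·(μ.bind κ)(𝒴 \ {y}) + Φ( r·√ᾱ/(2·√(1−ᾱ)) − ε·√(1−ᾱ)/(r·√ᾱ) ); i.e., the probability that the purified-and-classified adversarial input is misclassified is at most e^ε times the corresponding probability for the clean input, plus δ. -/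

import Mathlib

open MeasureTheory ProbabilityTheory Real

/-- The Gaussian probability measure `N(m, σ² I_d)` on `ℝ^d`, given by its Lebesgue density. -/
noncomputable def gaussian (d : ℕ) (m : EuclideanSpace ℝ (Fin d)) (σ2 : ℝ) :
    Measure (EuclideanSpace ℝ (Fin d)) :=
  volume.withDensity fun x => ENNReal.ofReal
    ((2 * π * σ2) ^ (-(d : ℝ) / 2) * Real.exp (-‖x - m‖ ^ 2 / (2 * σ2)))

/-- The standard normal cumulative distribution function `Φ`. -/
noncomputable def stdNormalCDF (x : ℝ) : ℝ := (gaussianReal 0 1 (Set.Iic x)).toReal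

/-!
Let `ν` and `μ` be the Gaussians with means `m'` and `m` and equal variance. Off the event `S`
where the log-likelihood ratio of `ν` to `μ` exceeds `ε`, the density of `ν` is at most `exp ε`
times that of `μ`, so that `ν ≤ exp ε • μ + ν.restrict S` as measures. This inequality survives
the application of any Markov kernel, which leaves the total mass `ν S` of the error term
unchanged. The log-likelihood ratio is an affine function of `⟪x, m' - m⟫`, which is normally
distributed under `ν`; hence `ν S` is a value of `Φ`, and for `0 ≤ ε` this value increases with
the distance of the means.
-/

section LikelihoodRatio

open scoped ENNReal

variable {X Y : Type*} [MeasurableSpace X] [MeasurableSpace Y]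

lemma withDensity_le_smul_add_restrict (μ : Measure X) {f g : X → ℝ≥0∞} (hg : Measurable g)
    (c : ℝ≥0∞) {A : Set X} (hA : MeasurableSet A) (hfg : ∀ x ∉ A, f x ≤ c * g x) :
    μ.withDensity f ≤ c • μ.withDensity g + (μ.withDensity f).restrict A := by
  have hind : Aᶜ.indicator f ≤ c • g := fun x ↦ by
    by_cases hx : x ∈ A
    · simp [hx]
    · simpa [hx] using hfg x hx
  calc μ.withDensity f
      = μ.withDensity (Aᶜ.indicator f) + (μ.withDensity f).restrict A := by
        rw [withDensity_indicator hA.compl, ← restrict_withDensity hA.compl, add_comm,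
          Measure.restrict_add_restrict_compl hA]
    _ ≤ c • μ.withDensity g + (μ.withDensity f).restrict A := by
        rw [← withDensity_smul c hg]
        gcongr
        exact withDensity_mono (.of_forall hind)

lemma bind_mono {μ ν : Measure X} (h : μ ≤ ν) (κ : Kernel X Y) : μ.bind κ ≤ ν.bind κ :=
  Measure.le_iff.2 fun A hA ↦ by
    rw [Measure.bind_apply hA κ.aemeasurable, Measure.bind_apply hA κ.aemeasurable]
    exact lintegral_mono' h le_rfl

lemma bind_apply_le_of_le_smul_add {μ ν ξ : Measure X} {c : ℝ≥0∞} (h : ν ≤ c • μ + ξ)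
    (κ : Kernel X Y) [IsMarkovKernel κ] (A : Set Y) :
    ν.bind κ A ≤ c * μ.bind κ A + ξ Set.univ :=
  calc ν.bind κ A
      ≤ (c • μ + ξ).bind κ A := bind_mono h κ A
    _ = c * μ.bind κ A + ξ.bind κ A := by
        simp only [Measure.comp_add, Measure.comp_smul, Measure.add_apply, Measure.smul_apply,
          smul_eq_mul]
    _ ≤ c * μ.bind κ A + ξ.bind κ Set.univ := by gcongr; exact Set.subset_univ A
    _ = c * μ.bind κ A + ξ Set.univ := by rw [Measure.comp_apply_univ]

end LikelihoodRatio

lemma monotone_stdNormalCDF : Monotone stdNormalCDF :=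
  fun _ _ h ↦ measureReal_mono (Set.Iic_subset_Iic.2 h)

lemma stdNormalCDF_nonneg (x : ℝ) : 0 ≤ stdNormalCDF x := measureReal_nonneg

lemma gaussianReal_real_Ioi (μ : ℝ) {v : NNReal} (hv : v ≠ 0) (b : ℝ) :
    (gaussianReal μ v).real (Set.Ioi b) = stdNormalCDF ((μ - b) / √v) := by
  have hσ : 0 < √(v : ℝ) := Real.sqrt_pos.2 (NNReal.coe_pos.2 hv.bot_lt)
  have hlaw : (gaussianReal 0 1).map (fun z ↦ μ - √v * z) = gaussianReal μ v := by
    calc (gaussianReal 0 1).map (fun z ↦ μ - √v * z)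
        = ((gaussianReal 0 1).map (√(v : ℝ) * ·)).map (μ - ·) :=
          (Measure.map_map (by fun_prop) (by fun_prop)).symm
      _ = gaussianReal μ v := by
          rw [gaussianReal_map_const_mul, gaussianReal_map_const_sub]
          congr 1
          · simp
          · ext; simp
  have hpre : (fun z ↦ μ - √v * z) ⁻¹' Set.Ioi b = Set.Iio ((μ - b) / √v) := by
    ext z
    rw [Set.mem_preimage, Set.mem_Ioi, Set.mem_Iio, lt_div_iff₀ hσ, lt_sub_comm, mul_comm]
  have := nullSingletonClass_gaussianReal (μ := 0) (v := 1) one_ne_zero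
  rw [← hlaw, map_measureReal_apply (by fun_prop) measurableSet_Ioi, hpre]
  exact measureReal_congr Iio_ae_eq_Iic

section Gaussian

open scoped RealInnerProductSpace

variable {d : ℕ} {s : ℝ}

/-- The Lebesgue density of `gaussian d m s` as a real-valued function, in which form two Gaussian
densities can be compared pointwise. -/
noncomputable def gaussianDensity (d : ℕ) (m : EuclideanSpace ℝ (Fin d)) (s : ℝ)
    (x : EuclideanSpace ℝ (Fin d)) : ℝ :=
  (2 * π * s) ^ (-(d : ℝ) / 2) * Real.exp (-‖x - m‖ ^ 2 / (2 * s))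

lemma gaussian_eq_withDensity (d : ℕ) (m : EuclideanSpace ℝ (Fin d)) (s : ℝ) :
    gaussian d m s = volume.withDensity fun x ↦ ENNReal.ofReal (gaussianDensity d m s x) := rfl

@[fun_prop]
lemma measurable_gaussianDensity (d : ℕ) (m : EuclideanSpace ℝ (Fin d)) (s : ℝ) :
    Measurable (gaussianDensity d m s) := by
  unfold gaussianDensity
  fun_prop

lemma gaussianDensity_nonneg (m : EuclideanSpace ℝ (Fin d)) (hs : 0 ≤ s)
    (x : EuclideanSpace ℝ (Fin d)) : 0 ≤ gaussianDensity d m s x := by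
  unfold gaussianDensity
  positivity

lemma gaussianDensity_add_right_mul_cexp (m t x : EuclideanSpace ℝ (Fin d)) (s : ℝ) :
    (gaussianDensity d m s (x + m) : ℂ) * Complex.exp (⟪x + m, t⟫ * Complex.I) =
      ((2 * π * s) ^ (-(d : ℝ) / 2) : ℝ) * Complex.exp (⟪m, t⟫ * Complex.I) *
        Complex.exp (-(1 / (2 * s) : ℝ) * ‖x‖ ^ 2 + Complex.I * ⟪t, x⟫) := by
  rw [gaussianDensity, add_sub_cancel_right, Complex.ofReal_mul, Complex.ofReal_exp,
    mul_assoc _ (Complex.exp _), mul_assoc _ (Complex.exp _), ← Complex.exp_add,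
    ← Complex.exp_add, inner_add_left, real_inner_comm x t]
  push_cast
  ring_nf

lemma ofReal_rpow_mul_cpow_eq_one (d : ℕ) (hs : 0 < s) :
    (((2 * π * s) ^ (-(d : ℝ) / 2) : ℝ) : ℂ) *
      (π / ((1 / (2 * s) : ℝ) : ℂ)) ^ ((d : ℂ) / 2) = 1 := by
  have hbase : (π : ℂ) / ((1 / (2 * s) : ℝ) : ℂ) = ((2 * π * s : ℝ) : ℂ) := by
    push_cast; field_simp
  have hpos : 0 < 2 * π * s := by positivity
  have hexp : (d : ℂ) / 2 = ((d / 2 : ℝ) : ℂ) := by push_cast; rfl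
  rw [hbase, hexp, ← Complex.ofReal_cpow hpos.le, ← Complex.ofReal_mul, ← Real.rpow_add hpos,
    neg_div, neg_add_cancel, Real.rpow_zero, Complex.ofReal_one]

lemma charFun_gaussian (m : EuclideanSpace ℝ (Fin d)) (hs : 0 < s)
    (t : EuclideanSpace ℝ (Fin d)) :
    charFun (gaussian d m s) t = Complex.exp (⟪m, t⟫ * Complex.I - s * ‖t‖ ^ 2 / 2) := by
  have hs' : (s : ℂ) ≠ 0 := Complex.ofReal_ne_zero.2 hs.ne'
  calc charFun (gaussian d m s) t
      = ∫ x, (gaussianDensity d m s x : ℂ) * Complex.exp (⟪x, t⟫ * Complex.I) := by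
        rw [charFun_apply, gaussian_eq_withDensity,
          integral_withDensity_eq_integral_toReal_smul (by fun_prop) (by simp)]
        simp only [ENNReal.toReal_ofReal (gaussianDensity_nonneg m hs.le _), Complex.real_smul]
    _ = ∫ x, (gaussianDensity d m s (x + m) : ℂ) * Complex.exp (⟪x + m, t⟫ * Complex.I) :=
        (integral_add_right_eq_self
          (fun x ↦ (gaussianDensity d m s x : ℂ) * Complex.exp (⟪x, t⟫ * Complex.I)) m).symm
    _ = Complex.exp (⟪m, t⟫ * Complex.I) * Complex.exp (-(s * ‖t‖ ^ 2 / 2)) := by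
        simp only [gaussianDensity_add_right_mul_cexp]
        rw [integral_const_mul, GaussianFourier.integral_cexp_neg_mul_sq_norm_add
          (by rw [Complex.ofReal_re]; positivity), finrank_euclideanSpace_fin, Complex.I_sq,
          mul_mul_mul_comm, ofReal_rpow_mul_cpow_eq_one d hs, one_mul]
        congr 2
        push_cast
        field_simp
        ring
    _ = Complex.exp (⟪m, t⟫ * Complex.I - s * ‖t‖ ^ 2 / 2) := by
        rw [← Complex.exp_add, ← sub_eq_add_neg]

lemma isProbabilityMeasure_gaussian (m : EuclideanSpace ℝ (Fin d)) (hs : 0 < s) :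
    IsProbabilityMeasure (gaussian d m s) := by
  have hmass : (gaussian d m s).real Set.univ = 1 := by
    have h := charFun_gaussian m hs 0
    rw [charFun_zero] at h
    simpa using h
  exact ⟨(ENNReal.toReal_eq_one_iff _).1 hmass⟩

lemma map_inner_gaussian (m : EuclideanSpace ℝ (Fin d)) (hs : 0 < s)
    (u : EuclideanSpace ℝ (Fin d)) :
    (gaussian d m s).map (fun x ↦ ⟪x, u⟫) = gaussianReal ⟪m, u⟫ (s * ‖u‖ ^ 2).toNNReal := by
  have := isProbabilityMeasure_gaussian m hs
  refine Measure.ext_of_charFun (funext fun t ↦ ?_)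
  have hnorm : ‖t • u‖ ^ 2 = t ^ 2 * ‖u‖ ^ 2 := by
    rw [norm_smul, mul_pow, Real.norm_eq_abs, sq_abs]
  calc charFun ((gaussian d m s).map fun x ↦ ⟪x, u⟫) t
      = charFun (gaussian d m s) (t • u) := by
        rw [charFun_apply_real, charFun_apply, integral_map (by fun_prop) (by fun_prop)]
        simp only [inner_smul_right, Complex.ofReal_mul]
    _ = charFun (gaussianReal ⟪m, u⟫ (s * ‖u‖ ^ 2).toNNReal) t := by
        rw [charFun_gaussian m hs, charFun_gaussianReal, inner_smul_right, ← Complex.ofReal_pow,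
          hnorm, Real.coe_toNNReal _ (by positivity)]
        push_cast
        ring_nf

/-- The logarithm of the likelihood ratio of `N(m', s I_d)` to `N(m, s I_d)` at `x`, known in
differential privacy as the privacy loss. -/
noncomputable def gaussianPrivacyLoss (m' m : EuclideanSpace ℝ (Fin d)) (s : ℝ)
    (x : EuclideanSpace ℝ (Fin d)) : ℝ :=
  (‖x - m‖ ^ 2 - ‖x - m'‖ ^ 2) / (2 * s)

@[fun_prop]
lemma measurable_gaussianPrivacyLoss (m' m : EuclideanSpace ℝ (Fin d)) (s : ℝ) :
    Measurable (gaussianPrivacyLoss m' m s) := by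
  unfold gaussianPrivacyLoss
  fun_prop

lemma gaussianDensity_eq_exp_privacyLoss_mul (m' m : EuclideanSpace ℝ (Fin d)) (s : ℝ)
    (x : EuclideanSpace ℝ (Fin d)) :
    gaussianDensity d m' s x =
      Real.exp (gaussianPrivacyLoss m' m s x) * gaussianDensity d m s x := by
  rw [gaussianDensity, gaussianDensity, gaussianPrivacyLoss, mul_left_comm, ← Real.exp_add]
  ring_nf

lemma gaussian_le_exp_smul_add_restrict (m' m : EuclideanSpace ℝ (Fin d)) (s ε : ℝ) :
    gaussian d m' s ≤ ENNReal.ofReal (Real.exp ε) • gaussian d m s +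
      (gaussian d m' s).restrict {x | ε < gaussianPrivacyLoss m' m s x} := by
  have hmeas : MeasurableSet {x | ε < gaussianPrivacyLoss m' m s x} :=
    measurableSet_lt measurable_const (by fun_prop)
  rw [gaussian_eq_withDensity d m', gaussian_eq_withDensity d m]
  refine withDensity_le_smul_add_restrict volume (by fun_prop) _ hmeas fun x hx ↦ ?_
  rw [gaussianDensity_eq_exp_privacyLoss_mul m' m, ENNReal.ofReal_mul (Real.exp_pos _).le]
  gcongr
  exact not_lt.1 hx

lemma lt_gaussianPrivacyLoss_iff (hs : 0 < s) (m' m x : EuclideanSpace ℝ (Fin d)) (ε : ℝ) :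
    ε < gaussianPrivacyLoss m' m s x ↔
      ⟪m', m' - m⟫ + (s * ε - ‖m' - m‖ ^ 2 / 2) < ⟪x, m' - m⟫ := by
  have hexpand : ‖x - m‖ ^ 2 =
      ‖x - m'‖ ^ 2 + 2 * (⟪x, m' - m⟫ - ⟪m', m' - m⟫) + ‖m' - m‖ ^ 2 := by
    rw [← inner_sub_left, ← norm_add_sq_real, sub_add_sub_cancel]
  rw [gaussianPrivacyLoss, lt_div_iff₀ (by positivity), hexpand]
  constructor <;> intro h <;> linarith

lemma gaussian_real_lt_privacyLoss {m' m : EuclideanSpace ℝ (Fin d)} (hs : 0 < s)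
    (hm : m' ≠ m) (ε : ℝ) :
    (gaussian d m' s).real {x | ε < gaussianPrivacyLoss m' m s x} =
      stdNormalCDF (‖m' - m‖ / (2 * √s) - ε * √s / ‖m' - m‖) := by
  have hnorm : 0 < ‖m' - m‖ := norm_pos_iff.2 (sub_ne_zero.2 hm)
  have : 0 < √s := Real.sqrt_pos.2 hs
  set b := ⟪m', m' - m⟫ + (s * ε - ‖m' - m‖ ^ 2 / 2) with hb
  calc (gaussian d m' s).real {x | ε < gaussianPrivacyLoss m' m s x}
      = ((gaussian d m' s).map fun x ↦ ⟪x, m' - m⟫).real (Set.Ioi b) := by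
        rw [map_measureReal_apply (by fun_prop) measurableSet_Ioi]
        simp only [lt_gaussianPrivacyLoss_iff hs]
        rfl
    _ = stdNormalCDF ((⟪m', m' - m⟫ - b) / (√s * ‖m' - m‖)) := by
        rw [map_inner_gaussian m' hs, gaussianReal_real_Ioi _ (by positivity),
          Real.coe_toNNReal _ (by positivity), Real.sqrt_mul hs.le, Real.sqrt_sq hnorm.le]
    _ = stdNormalCDF (‖m' - m‖ / (2 * √s) - ε * √s / ‖m' - m‖) := by
        congr 1
        rw [hb]
        field_simp
        rw [Real.sq_sqrt hs.le]
        ring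

lemma gaussian_real_lt_privacyLoss_le {m' m : EuclideanSpace ℝ (Fin d)} {ρ ε : ℝ} (hs : 0 < s)
    (hε : 0 ≤ ε) (hm : ‖m' - m‖ ≤ ρ) :
    (gaussian d m' s).real {x | ε < gaussianPrivacyLoss m' m s x} ≤
      stdNormalCDF (ρ / (2 * √s) - ε * √s / ρ) := by
  rcases eq_or_ne m' m with rfl | hne
  · simpa [gaussianPrivacyLoss, hε.not_gt] using stdNormalCDF_nonneg _
  · have hnorm : 0 < ‖m' - m‖ := norm_pos_iff.2 (sub_ne_zero.2 hne)
    rw [gaussian_real_lt_privacyLoss hs hne]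
    apply monotone_stdNormalCDF
    gcongr

end Gaussian

lemma norm_smul_add_sub_smul {E : Type*} [SeminormedAddCommGroup E] [NormedSpace ℝ E] {a : ℝ}
    (ha : 0 ≤ a) (x v : E) : ‖a • (x + v) - a • x‖ = ‖v‖ * a := by
  rw [← smul_sub, add_sub_cancel_left, norm_smul, Real.norm_of_nonneg ha, mul_comm]

theorem stmt1_general {d : ℕ} {s ρ ε : ℝ} (hs : 0 < s) (hε : 0 ≤ ε)
    {m' m : EuclideanSpace ℝ (Fin d)} (hm : ‖m' - m‖ < ρ) {Y : Type*} [MeasurableSpace Y]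
    (κ : Kernel (EuclideanSpace ℝ (Fin d)) Y) [IsMarkovKernel κ] (A : Set Y) :
    ((gaussian d m' s).bind κ).real A ≤
      Real.exp ε * ((gaussian d m s).bind κ).real A +
        stdNormalCDF (ρ / (2 * √s) - ε * √s / ρ) := by
  have := isProbabilityMeasure_gaussian m hs
  have := isProbabilityMeasure_gaussian m' hs
  set S := {x | ε < gaussianPrivacyLoss m' m s x}
  have hpost : (gaussian d m' s).bind κ A ≤
      ENNReal.ofReal (Real.exp ε) * (gaussian d m s).bind κ A + gaussian d m' s S := by
    simpa only [Measure.restrict_apply_univ] using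
      bind_apply_le_of_le_smul_add (gaussian_le_exp_smul_add_restrict m' m s ε) κ A
  calc ((gaussian d m' s).bind κ).real A
      ≤ (ENNReal.ofReal (Real.exp ε) * (gaussian d m s).bind κ A + gaussian d m' s S).toReal :=
        ENNReal.toReal_mono (by finiteness) hpost
    _ = Real.exp ε * ((gaussian d m s).bind κ).real A + (gaussian d m' s).real S := by
        rw [ENNReal.toReal_add (by finiteness) (by finiteness), ENNReal.toReal_mul,
          ENNReal.toReal_ofReal (Real.exp_pos ε).le]
        rfl
    _ ≤ Real.exp ε * ((gaussian d m s).bind κ).real A +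
        stdNormalCDF (ρ / (2 * √s) - ε * √s / ρ) := by
        gcongr
        exact gaussian_real_lt_privacyLoss_le hs hε hm.le

theorem stmt1 (d : ℕ) (hd : 1 ≤ d) (ᾱ r ε : ℝ) (hᾱ : ᾱ ∈ Set.Ioo (0 : ℝ) 1)
    (hr : 0 < r) (hε : 0 ≤ ε) (x₀ Δx : EuclideanSpace ℝ (Fin d)) (hΔx : ‖Δx‖ < r)
    {Y : Type*} [MeasurableSpace Y]
    (κ : Kernel (EuclideanSpace ℝ (Fin d)) Y) [IsMarkovKernel κ]
    (y : Y) (hy : MeasurableSet ({y} : Set Y)) :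
    (((gaussian d (Real.sqrt ᾱ • (x₀ + Δx)) (1 - ᾱ)).bind κ) ({y}ᶜ)).toReal ≤
      Real.exp ε * (((gaussian d (Real.sqrt ᾱ • x₀) (1 - ᾱ)).bind κ) ({y}ᶜ)).toReal +
        stdNormalCDF (r * Real.sqrt ᾱ / (2 * Real.sqrt (1 - ᾱ)) -
          ε * Real.sqrt (1 - ᾱ) / (r * Real.sqrt ᾱ)) := by
  have hscale : 0 < √ᾱ := Real.sqrt_pos.2 hᾱ.1
  exact stmt1_general (sub_pos.2 hᾱ.2) hε
    (by rw [norm_smul_add_sub_smul hscale.le]; gcongr) κ {y}ᶜ
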